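/- arXiv:1404.3378 — 4 statements merged into one kernel-verified Lean document; each statement's English description precedes it below -/
import Mathlib

section
/- Let n ≥ 1 and let X_1, …, X_n be {0,1}-valued random variables on a probability space such that for every subset S ⊆ [n], Pr(∀ i ∈ S, X_i = 1) ≤ α^{|S|}. Then for every β with α < β ≤ 1, Pr( (1/n)·∑_{i=1}^n X_i ≥ β ) ≤ exp(−2(β − α)² n). -/
open MeasureTheory ProbabilityTheory

/-!
Let `t ≥ 0` and `c = exp t - 1 ≥ 0`. By convexity `exp (t * x) ≤ 1 + c * x` on `[0, 1]`, so
`exp (t * ∑ i, X i) ≤ ∏ i, (1 + c * X i) = ∑ S, c ^ #S * ∏ i ∈ S, X i`. The coefficients `c ^ #S`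
are nonnegative, so upper bounds on the expectations of the products replace independence: the
left-hand side has expectation at most `∏ i, (1 + c * a i)`, the moment generating function of a
sum of independent Bernoulli variables of means `a i`. Hoeffding's lemma bounds each factor, and
Chernoff's bound concludes as in the independent case.
-/

open scoped BigOperators

lemma exp_mul_le_one_add_mul_of_mem_Icc {x : ℝ} (hx : x ∈ Set.Icc 0 1) (t : ℝ) :
    Real.exp (t * x) ≤ 1 + (Real.exp t - 1) * x := by
  have hconvex := convexOn_exp.2 (Set.mem_univ 0) (Set.mem_univ t) (sub_nonneg.2 hx.2) hx.1
    (sub_add_cancel 1 x)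
  simp only [smul_eq_mul, mul_zero, zero_add, Real.exp_zero] at hconvex
  calc Real.exp (t * x) = Real.exp (x * t) := by rw [mul_comm]
    _ ≤ (1 - x) * 1 + x * Real.exp t := hconvex
    _ = 1 + (Real.exp t - 1) * x := by ring

lemma mgf_le_exp_of_mem_Icc {Ω : Type*} {mΩ : MeasurableSpace Ω} {μ : Measure Ω}
    [IsProbabilityMeasure μ] {Y : Ω → ℝ} {a b : ℝ}
    (hY : AEMeasurable Y μ) (hab : ∀ᵐ ω ∂μ, Y ω ∈ Set.Icc a b) (t : ℝ) :
    mgf Y μ t ≤ Real.exp (t * μ[Y] + (b - a) ^ 2 * t ^ 2 / 8) := by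
  have hcentered := (hasSubgaussianMGF_of_mem_Icc hY hab).mgf_le t
  calc mgf Y μ t = mgf (fun ω ↦ (Y ω - μ[Y]) + μ[Y]) μ t := by simp only [sub_add_cancel]
    _ = mgf (fun ω ↦ Y ω - μ[Y]) μ t * Real.exp (t * μ[Y]) := mgf_add_const _
    _ ≤ Real.exp (((‖b - a‖₊ / 2) ^ 2 : NNReal) * t ^ 2 / 2) * Real.exp (t * μ[Y]) := by gcongr
    _ = Real.exp (t * μ[Y] + (b - a) ^ 2 * t ^ 2 / 8) := by
      rw [← Real.exp_add]
      congr 1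
      simp only [NNReal.coe_pow, NNReal.coe_div, coe_nnnorm, NNReal.coe_ofNat, div_pow,
        Real.norm_eq_abs, sq_abs]
      ring

lemma one_add_mul_le_exp_of_mem_Icc {p : ℝ} (hp : p ∈ Set.Icc 0 1) (t : ℝ) :
    1 + (Real.exp t - 1) * p ≤ Real.exp (t * p + t ^ 2 / 8) := by
  let ν : Measure ℝ := bernoulliMeasure 1 0 ⟨p, hp⟩
  have hmem : ∀ᵐ x ∂ν, id x ∈ Set.Icc (0 : ℝ) 1 := by
    simp [ν, bernoulliMeasure_def, ae_add_measure_iff, Measure.ae_smul_measure, ae_dirac_eq]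
  have hmgf : mgf id ν t = 1 + (Real.exp t - 1) * p := by
    simp only [mgf, ν, integral_bernoulliMeasure, id_eq, smul_eq_mul, mul_one, mul_zero,
      Real.exp_zero]
    ring
  have hmean : ∫ x, x ∂ν = p := by simp [ν, integral_bernoulliMeasure]
  simpa [hmgf, hmean] using mgf_le_exp_of_mem_Icc aemeasurable_id hmem t

section ProductMoments

variable {Ω ι : Type*} {mΩ : MeasurableSpace Ω} {μ : Measure Ω} {X : ι → Ω → ℝ}

lemma integrable_prod_of_mem_Icc [IsFiniteMeasure μ] (hX : ∀ i, AEMeasurable (X i) μ)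
    (h01 : ∀ i, ∀ᵐ ω ∂μ, X i ω ∈ Set.Icc 0 1) (S : Finset ι) :
    Integrable (fun ω ↦ ∏ i ∈ S, X i ω) μ := by
  refine .of_mem_Icc 0 1 (by fun_prop) ?_
  filter_upwards [(ae_ball_iff S.countable_toSet).2 fun i _ ↦ h01 i] with ω hω
  exact ⟨Finset.prod_nonneg fun i hi ↦ (hω i hi).1,
    Finset.prod_le_one (fun i hi ↦ (hω i hi).1) fun i hi ↦ (hω i hi).2⟩

lemma integral_prod_of_eq_zero_or_one (hX : ∀ i, AEMeasurable (X i) μ)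
    (h01 : ∀ i ω, X i ω = 0 ∨ X i ω = 1) (S : Finset ι) :
    ∫ ω, ∏ i ∈ S, X i ω ∂μ = μ.real {ω | ∀ i ∈ S, X i ω = 1} := by
  have hprod_zero {ω : Ω} (hω : ¬∀ i ∈ S, X i ω = 1) : ∏ i ∈ S, X i ω = 0 := by
    push Not at hω
    obtain ⟨i, hi, hne⟩ := hω
    exact Finset.prod_eq_zero hi ((h01 i ω).resolve_right hne)
  have hprod_one (ω : Ω) : ∏ i ∈ S, X i ω = 1 ↔ ∀ i ∈ S, X i ω = 1 :=
    ⟨fun h ↦ by_contra fun hω ↦ zero_ne_one ((hprod_zero hω).symm.trans h), Finset.prod_eq_one⟩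
  have hprod (ω : Ω) : ∏ i ∈ S, X i ω = 0 ∨ ∏ i ∈ S, X i ω = 1 :=
    (em (∀ i ∈ S, X i ω = 1)).symm.imp hprod_zero Finset.prod_eq_one
  simp only [integral_of_ae_eq_zero_or_one (by fun_prop) (.of_forall hprod), hprod_one]

variable [Fintype ι] {a : ι → ℝ}

lemma integrable_prod_one_add_mul (c : ℝ)
    (hint : ∀ S : Finset ι, Integrable (fun ω ↦ ∏ i ∈ S, X i ω) μ) :
    Integrable (fun ω ↦ ∏ i, (1 + c * X i ω)) μ := by
  simp only [Finset.prod_one_add, Finset.prod_mul_distrib, Finset.prod_const]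
  exact integrable_finsetSum _ fun S _ ↦ (hint S).const_mul _

lemma integral_prod_one_add_mul_le {c : ℝ} (hc : 0 ≤ c)
    (hint : ∀ S : Finset ι, Integrable (fun ω ↦ ∏ i ∈ S, X i ω) μ)
    (hmom : ∀ S : Finset ι, ∫ ω, ∏ i ∈ S, X i ω ∂μ ≤ ∏ i ∈ S, a i) :
    ∫ ω, ∏ i, (1 + c * X i ω) ∂μ ≤ ∏ i, (1 + c * a i) := by
  simp only [Finset.prod_one_add, Finset.prod_mul_distrib, Finset.prod_const]
  rw [integral_finsetSum _ fun S _ ↦ (hint S).const_mul _]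
  simp only [integral_const_mul]
  gcongr with S
  exact hmom S

variable [IsFiniteMeasure μ]

lemma mgf_sum_le_exp_of_integral_prod_le (hX : ∀ i, AEMeasurable (X i) μ)
    (h01 : ∀ i, ∀ᵐ ω ∂μ, X i ω ∈ Set.Icc 0 1) (ha : ∀ i, a i ∈ Set.Icc 0 1)
    (hmom : ∀ S : Finset ι, ∫ ω, ∏ i ∈ S, X i ω ∂μ ≤ ∏ i ∈ S, a i) {t : ℝ} (ht : 0 ≤ t) :
    mgf (fun ω ↦ ∑ i, X i ω) μ t ≤ Real.exp (t * ∑ i, a i + Fintype.card ι * (t ^ 2 / 8)) := by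
  have hc : 0 ≤ Real.exp t - 1 := sub_nonneg.2 (Real.one_le_exp ht)
  have hint := integrable_prod_of_mem_Icc hX h01
  calc mgf (fun ω ↦ ∑ i, X i ω) μ t
      ≤ ∫ ω, ∏ i, (1 + (Real.exp t - 1) * X i ω) ∂μ := by
        refine integral_mono_of_nonneg (.of_forall fun _ ↦ Real.exp_nonneg _)
          (integrable_prod_one_add_mul _ hint) ?_
        filter_upwards [ae_all_iff.2 h01] with ω hω
        simp only [Finset.mul_sum, Real.exp_sum]
        gcongr with i
        exact exp_mul_le_one_add_mul_of_mem_Icc (hω i) t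
    _ ≤ ∏ i, (1 + (Real.exp t - 1) * a i) := integral_prod_one_add_mul_le hc hint hmom
    _ ≤ ∏ i, Real.exp (t * a i + t ^ 2 / 8) := by
        gcongr with i
        · exact fun i _ ↦ add_nonneg zero_le_one (mul_nonneg hc (ha i).1)
        · exact one_add_mul_le_exp_of_mem_Icc (ha i) t
    _ = Real.exp (t * ∑ i, a i + Fintype.card ι * (t ^ 2 / 8)) := by
        rw [← Real.exp_sum, Finset.sum_add_distrib, ← Finset.mul_sum, Finset.sum_const,
          Finset.card_univ, nsmul_eq_mul]

theorem linial_luria_subgaussian_general [Nonempty ι] (hX : ∀ i, AEMeasurable (X i) μ)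
    (h01 : ∀ i, ∀ᵐ ω ∂μ, X i ω ∈ Set.Icc 0 1) (ha : ∀ i, a i ∈ Set.Icc 0 1)
    (hmom : ∀ S : Finset ι, ∫ ω, ∏ i ∈ S, X i ω ∂μ ≤ ∏ i ∈ S, a i)
    {β : ℝ} (hβ : 𝔼 i, a i ≤ β) :
    μ.real {ω | β ≤ 𝔼 i, X i ω} ≤ Real.exp (-2 * (β - 𝔼 i, a i) ^ 2 * Fintype.card ι) := by
  have hcard : (0 : ℝ) < Fintype.card ι := Nat.cast_pos.2 Fintype.card_pos
  -- With `n = Fintype.card ι`, this minimizes `-t * (β * n) + t * ∑ i, a i + n * (t ^ 2 / 8)`.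
  let t : ℝ := 4 * (β - 𝔼 i, a i)
  have ht : 0 ≤ t := mul_nonneg zero_le_four (sub_nonneg.2 hβ)
  have hsum : ∑ i, a i = (𝔼 i, a i) * Fintype.card ι := by
    rw [Fintype.expect_eq_sum_div_card, div_mul_cancel₀ _ hcard.ne']
  have hint : Integrable (fun ω ↦ Real.exp (t * ∑ i, X i ω)) μ := by
    refine integrable_exp_mul_of_mem_Icc (a := 0) (b := Fintype.card ι) (by fun_prop) ?_
    filter_upwards [ae_all_iff.2 h01] with ω hω
    refine ⟨Finset.sum_nonneg fun i _ ↦ (hω i).1, ?_⟩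
    simpa using Finset.sum_le_card_nsmul Finset.univ (X · ω) 1 fun i _ ↦ (hω i).2
  calc μ.real {ω | β ≤ 𝔼 i, X i ω}
      = μ.real {ω | β * Fintype.card ι ≤ ∑ i, X i ω} := by
        simp only [Fintype.expect_eq_sum_div_card, le_div_iff₀ hcard]
    _ ≤ Real.exp (-t * (β * Fintype.card ι)) * mgf (fun ω ↦ ∑ i, X i ω) μ t :=
        measure_ge_le_exp_mul_mgf _ ht hint
    _ ≤ Real.exp (-t * (β * Fintype.card ι)) *
          Real.exp (t * ∑ i, a i + Fintype.card ι * (t ^ 2 / 8)) := by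
        gcongr
        exact mgf_sum_le_exp_of_integral_prod_le hX h01 ha hmom ht
    _ = Real.exp (-2 * (β - 𝔼 i, a i) ^ 2 * Fintype.card ι) := by
        rw [← Real.exp_add, hsum]
        congr 1
        ring

end ProductMoments

/-- Linial–Luria Chernoff-type bound (sub-Gaussian form): if `X_1,…,X_n` are
`{0,1}`-valued random variables such that for every subset `S ⊆ [n]` we have
`Pr(∀ i ∈ S, X_i = 1) ≤ α^|S|`, then for every `β` with `α < β ≤ 1`,
`Pr((1/n)·∑ X_i ≥ β) ≤ exp(−2(β−α)²n)`. -/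
theorem linial_luria_subgaussian {Ω : Type*} [MeasureSpace Ω]
    [IsProbabilityMeasure (ℙ : Measure Ω)]
    (n : ℕ) (hn : 1 ≤ n) (X : Fin n → Ω → ℝ)
    (hmeas : ∀ i, Measurable (X i))
    (hval : ∀ i ω, X i ω = 0 ∨ X i ω = 1)
    (α β : ℝ) (hα : 0 ≤ α) (hαβ : α < β) (hβ : β ≤ 1)
    (hmom : ∀ S : Finset (Fin n),
      ℙ {ω | ∀ i ∈ S, X i ω = 1} ≤ ENNReal.ofReal (α ^ S.card)) :
    ℙ {ω | β ≤ (1 / n) * ∑ i, X i ω} ≤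
      ENNReal.ofReal (Real.exp (-2 * (β - α) ^ 2 * n)) := by
  have : Nonempty (Fin n) := ⟨⟨0, hn⟩⟩
  have hX (i : Fin n) : AEMeasurable (X i) := (hmeas i).aemeasurable
  have h01 (i : Fin n) : ∀ᵐ ω, X i ω ∈ Set.Icc 0 1 :=
    .of_forall fun ω ↦ by rcases hval i ω with h | h <;> simp [h]
  have hprod (S : Finset (Fin n)) : ∫ ω, ∏ i ∈ S, X i ω ≤ ∏ _i ∈ S, α := by
    rw [integral_prod_of_eq_zero_or_one hX hval, Finset.prod_const]
    exact ENNReal.toReal_le_of_le_ofReal (pow_nonneg hα _) (hmom S)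
  simpa [Fintype.expect_eq_sum_div_card, div_eq_inv_mul] using ENNReal.ofReal_le_ofReal <|
    linial_luria_subgaussian_general (β := β) hX h01 (fun _ ↦ ⟨hα, hαβ.le.trans hβ⟩) hprod
      (by simpa using hαβ.le)
end

section
/- Let K ≥ 1 and n ≥ 4K² be integers, let n' = ⌊n/(2K)⌋, and let x_1, …, x_{n'} be independent uniformly random K-element subsets of [n]. Then with probability at least 1 − exp(−2^{−(2K+3)}·n'), the number of indices r ∈ [n'] such that x_r is disjoint from x_s for every s < r is at least 2^{−(K+2)}·n'. -/
open MeasureTheory ProbabilityTheory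

/-!
Reveal the sets one at a time.  Those revealed before step `r ≤ n'` cover at most
`(r - 1) * K ≤ n / 2 - K` points, so, whatever they are, a uniform `K`-set avoids all of them with
probability at least `p = 2⁻ᴷ`.  On the negative axis the moment generating function of the number
`N` of successes is therefore at most that of a Poisson variable of mean `p * n'`, and Chernoff's
bound with parameter `-1` gives
`P(N ≤ p * n' / 4) ≤ exp (p * n' / 4 - (1 - e⁻¹) * p * n') ≤ exp (-p * n' / 4)`.
-/

section GreedyCount

variable {β : Type*}

/-- The number of terms of the sequence `f` that are `R`-related to every earlier term.  For
`R = Disjoint` this is the number of clauses disjoint from all the preceding ones, whether or not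
those were themselves counted. -/
noncomputable def greedyCount (R : β → β → Prop) {m : ℕ} (f : Fin m → β) : ℕ :=
  Nat.card {r : Fin m // ∀ s : Fin m, s < r → R (f r) (f s)}

lemma greedyCount_le (R : β → β → Prop) {m : ℕ} (f : Fin m → β) : greedyCount R f ≤ m :=
  (Finite.card_subtype_le _).trans_eq (Nat.card_fin m)

open Classical in
lemma greedyCount_eq_sum (R : β → β → Prop) {m : ℕ} (f : Fin m → β) :
    greedyCount R f = ∑ r, if ∀ s < r, R (f r) (f s) then 1 else 0 := by
  rw [greedyCount, Nat.card_eq_fintype_card, Fintype.card_subtype, Finset.card_filter]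

lemma greedyCount_snoc (R : β → β → Prop) {m : ℕ} (f : Fin m → β) (b : β) :
    (greedyCount R (Fin.snoc f b : Fin (m + 1) → β) : ℝ) =
      greedyCount R f + {b | ∀ i, R b (f i)}.indicator 1 b := by
  classical
  rw [greedyCount_eq_sum, greedyCount_eq_sum, Fin.sum_univ_castSucc]
  simp only [Fin.forall_fin_succ', Fin.snoc_castSucc, Fin.snoc_last, Fin.castSucc_lt_castSucc_iff,
    (Fin.castSucc_lt_last _).not_gt, Fin.castSucc_lt_last, lt_irrefl, false_imp_iff, true_imp_iff,
    and_true]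
  simp [Set.indicator_apply]

variable [MeasurableSpace β] {R : β → β → Prop}

lemma measurable_greedyCount (hR : Measurable fun q : β × β => R q.1 q.2) (m : ℕ) :
    Measurable fun f : Fin m → β => (greedyCount R f : ℝ) := by
  classical
  have h_rel (r s : Fin m) : Measurable fun f : Fin m → β => R (f r) (f s) :=
    hR.fun_comp (f := fun f : Fin m → β => (f r, f s)) (by fun_prop)
  simp only [greedyCount_eq_sum, Nat.cast_sum]
  exact Finset.measurable_sum _ fun r _ => measurable_from_top.comp <|
    Measurable.ite (Measurable.forall fun s => .forall fun _ => h_rel r s).setOf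
      measurable_const measurable_const

lemma integrable_exp_mul_greedyCount (hR : Measurable fun q : β × β => R q.1 q.2) {m : ℕ}
    (μ : Measure (Fin m → β)) [IsFiniteMeasure μ] (t : ℝ) :
    Integrable (fun f => Real.exp (t * greedyCount R f)) μ :=
  integrable_exp_mul_of_mem_Icc (measurable_greedyCount hR m).aemeasurable
    (.of_forall fun f => ⟨Nat.cast_nonneg _, Nat.cast_le.2 (greedyCount_le R f)⟩)

end GreedyCount

section LaplaceTransform

variable {β : Type*} [MeasurableSpace β] {ν : Measure β} [IsProbabilityMeasure ν]

lemma mgf_indicator_one_le {s : Set β} (hs : MeasurableSet s) {p t : ℝ} (hp : p ≤ ν.real s)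
    (ht : t ≤ 0) : mgf (s.indicator 1) ν t ≤ Real.exp (p * (Real.exp t - 1)) := by
  have h_exp (b : β) : Real.exp (t * s.indicator 1 b) =
      s.indicator (fun _ => Real.exp t - 1) b + 1 := by
    by_cases hb : b ∈ s <;> simp [hb]
  calc mgf (s.indicator 1) ν t = ν.real s * (Real.exp t - 1) + 1 := by
        simp only [mgf, h_exp]
        rw [integral_add ((integrable_const _).indicator hs) (integrable_const _),
          integral_indicator_const _ hs]
        simp
    _ ≤ p * (Real.exp t - 1) + 1 := by
        gcongr ?_ + 1
        exact mul_le_mul_of_nonpos_right hp (sub_nonpos.2 (Real.exp_le_one_iff.2 ht))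
    _ ≤ Real.exp (p * (Real.exp t - 1)) := Real.add_one_le_exp _

variable {R : β → β → Prop}

lemma mgf_greedyCount_succ (hR : Measurable fun q : β × β => R q.1 q.2) (m : ℕ) (t : ℝ) :
    mgf (fun f : Fin (m + 1) → β => (greedyCount R f : ℝ)) (Measure.pi fun _ => ν) t =
      ∫ f, Real.exp (t * greedyCount R f) * mgf ({b | ∀ i, R b (f i)}.indicator 1) ν t
        ∂Measure.pi fun _ : Fin m => ν := by
  have e := (measurePreserving_piFinSuccAbove (fun _ : Fin (m + 1) => ν) (Fin.last m)).symm
  have h_int := (e.integrable_comp_emb (MeasurableEquiv.measurableEmbedding _)).2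
    (integrable_exp_mul_greedyCount hR _ t)
  rw [mgf, ← e.integral_comp']
  refine (integral_prod_symm _ h_int).trans (integral_congr_ae (.of_forall fun f => ?_))
  simp only [mgf, ← integral_const_mul]
  congr 1 with b
  have h_snoc : (MeasurableEquiv.piFinSuccAbove (fun _ => β) (Fin.last m)).symm (b, f) =
      Fin.snoc f b := Fin.insertNth_last' b f
  rw [Function.comp_apply, h_snoc, greedyCount_snoc, mul_add, Real.exp_add]

lemma mgf_greedyCount_pi_le (hR : Measurable fun q : β × β => R q.1 q.2) {m : ℕ} {p t : ℝ}
    (hp : ∀ k < m, ∀ᵐ f ∂(Measure.pi fun _ : Fin k => ν), p ≤ ν.real {b | ∀ i, R b (f i)})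
    (ht : t ≤ 0) :
    mgf (fun f : Fin m → β => (greedyCount R f : ℝ)) (Measure.pi fun _ => ν) t ≤
      Real.exp (m * (p * (Real.exp t - 1))) := by
  induction m with
  | zero => simp [mgf, greedyCount]
  | succ m ih =>
    have h_meas (f : Fin m → β) : MeasurableSet {b | ∀ i, R b (f i)} :=
      (Measurable.forall fun i => hR.fun_comp (measurable_id.prodMk measurable_const)).setOf
    rw [mgf_greedyCount_succ hR]
    calc ∫ f, Real.exp (t * greedyCount R f) * mgf ({b | ∀ i, R b (f i)}.indicator 1) ν t
          ∂(Measure.pi fun _ : Fin m => ν)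
        ≤ ∫ f, Real.exp (t * greedyCount R f) * Real.exp (p * (Real.exp t - 1))
          ∂(Measure.pi fun _ : Fin m => ν) := by
          refine integral_mono_of_nonneg (.of_forall fun f => ?_)
            ((integrable_exp_mul_greedyCount hR _ t).mul_const _) ?_
          · exact mul_nonneg (Real.exp_nonneg _) mgf_nonneg
          · filter_upwards [hp m m.lt_succ_self] with f hf
            gcongr
            exact mgf_indicator_one_le (h_meas f) hf ht
      _ ≤ Real.exp (m * (p * (Real.exp t - 1))) * Real.exp (p * (Real.exp t - 1)) := by
          rw [integral_mul_const]
          gcongr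
          exact ih fun k hk => hp k (hk.trans m.lt_succ_self)
      _ = Real.exp ((m + 1 : ℕ) * (p * (Real.exp t - 1))) := by
          rw [← Real.exp_add, Nat.cast_succ, add_one_mul]

lemma measureReal_greedyCount_le_le_exp {Ω : Type*} [MeasurableSpace Ω] {P : Measure Ω} {m : ℕ}
    {X : Fin m → Ω → β} (hX : ∀ r, HasLaw (X r) ν P) (h_indep : iIndepFun X P)
    (hR : Measurable fun q : β × β => R q.1 q.2) {p : ℝ} (hp₀ : 0 ≤ p)
    (hp : ∀ k < m, ∀ᵐ f ∂(Measure.pi fun _ : Fin k => ν), p ≤ ν.real {b | ∀ i, R b (f i)}) :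
    P.real {ω | (greedyCount R (X · ω) : ℝ) ≤ p / 4 * m} ≤ Real.exp (-(p / 4 * m)) := by
  have := h_indep.isProbabilityMeasure
  have h_exp : Real.exp (-1) ≤ 1 / 2 := by linarith [Real.exp_neg_one_lt_d9]
  rw [(h_indep.hasLaw_pi hX).measureReal_eq (p := fun f => (greedyCount R f : ℝ) ≤ p / 4 * m)
    ((measurable_greedyCount hR m) measurableSet_Iic)]
  calc _ ≤ Real.exp (-(-1) * (p / 4 * m)) *
          mgf (fun f : Fin m → β => (greedyCount R f : ℝ)) (Measure.pi fun _ => ν) (-1) :=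
        measure_le_le_exp_mul_mgf _ (by norm_num) (integrable_exp_mul_greedyCount hR _ _)
    _ ≤ Real.exp (-(-1) * (p / 4 * m)) * Real.exp (m * (p * (Real.exp (-1) - 1))) := by
        gcongr
        exact mgf_greedyCount_pi_le hR hp (by norm_num)
    _ ≤ Real.exp (-(p / 4 * m)) := by
        rw [← Real.exp_add, Real.exp_le_exp]
        nlinarith [mul_nonneg hp₀ (Nat.cast_nonneg (α := ℝ) m)]

end LaplaceTransform

lemma one_sub_ofReal_le_measure_ge {Ω : Type*} [MeasurableSpace Ω] {P : Measure Ω}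
    [IsProbabilityMeasure P] {Y : Ω → ℝ} {a x : ℝ} (h : P.real {ω | Y ω ≤ a} ≤ x) :
    1 - ENNReal.ofReal x ≤ P {ω | a ≤ Y ω} := by
  rw [tsub_le_iff_left]
  calc 1 = P Set.univ := measure_univ.symm
    _ ≤ P ({ω | Y ω ≤ a} ∪ {ω | a ≤ Y ω}) := measure_mono fun ω _ => le_total (Y ω) a
    _ ≤ P {ω | Y ω ≤ a} + P {ω | a ≤ Y ω} := measure_union_le _ _
    _ ≤ ENNReal.ofReal x + P {ω | a ≤ Y ω} := by
        gcongr
        exact (ofReal_measureReal (μ := P)).symm.trans_le (ENNReal.ofReal_le_ofReal h)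

section UniformSubsets

lemma choose_le_pow_mul_choose {c n M k : ℕ} (h : n ≤ c * (M + 1 - k)) :
    n.choose k ≤ c ^ k * M.choose k := by
  refine Nat.le_of_mul_le_mul_left ?_ k.factorial_pos
  calc k.factorial * n.choose k = n.descFactorial k :=
        (Nat.descFactorial_eq_factorial_mul_choose n k).symm
    _ ≤ n ^ k := Nat.descFactorial_le_pow n k
    _ ≤ (c * (M + 1 - k)) ^ k := Nat.pow_le_pow_left h k
    _ = c ^ k * (M + 1 - k) ^ k := mul_pow _ _ _
    _ ≤ c ^ k * M.descFactorial k := Nat.mul_le_mul_left _ (Nat.pow_sub_le_descFactorial M k)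
    _ = k.factorial * (c ^ k * M.choose k) := by
        rw [Nat.descFactorial_eq_factorial_mul_choose, mul_left_comm]

lemma hasLaw_uniformOn_of_measure_eq {Ω β : Type*} [MeasurableSpace Ω] [MeasurableSpace β]
    [MeasurableSingletonClass β] [Countable β] {P : Measure Ω} {X : Ω → β} {S : Finset β}
    (hX : AEMeasurable X P) (h_mem : ∀ᵐ ω ∂P, X ω ∈ S)
    (h_unif : ∀ b ∈ S, P {ω | X ω = b} = (S.card : ENNReal)⁻¹) :
    HasLaw X (uniformOn (S : Set β)) P where
  aemeasurable := hX
  map_eq := by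
    classical
    refine Measure.ext_of_singleton fun b => ?_
    rw [Measure.map_apply_of_aemeasurable hX (measurableSet_singleton b),
      ← Finset.coe_singleton b, uniformOn_apply_finset, Finset.coe_singleton]
    change P {ω | X ω = b} = _
    by_cases hb : b ∈ S
    · simpa [Finset.inter_singleton_of_mem hb] using h_unif b hb
    · have h_null : P {ω | X ω = b} = 0 :=
        measure_mono_null (fun ω hω h => hb (hω ▸ h)) h_mem
      simpa [Finset.inter_singleton_of_notMem hb] using h_null

variable {α : Type*} [Fintype α] [MeasurableSpace (Finset α)]
  [MeasurableSingletonClass (Finset α)]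

variable (α) in
/-- The law of a uniformly random `K`-element subset of `α`; it is the zero measure if `α` has fewer
than `K` elements. -/
noncomputable abbrev uniformPowersetCard (K : ℕ) : Measure (Finset α) :=
  uniformOn (Finset.powersetCard K (Finset.univ : Finset α))

lemma inv_two_pow_le_uniformPowersetCard_disjoint {K k : ℕ} (h : 2 * K * (k + 1) ≤ Fintype.card α)
    {f : Fin k → Finset α} (hf : ∀ i, (f i).card ≤ K) :
    ((2 : ℝ) ^ K)⁻¹ ≤ (uniformPowersetCard α K).real {A | ∀ i, Disjoint A (f i)} := by
  classical
  set n := Fintype.card α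
  set U : Finset α := Finset.univ.biUnion f
  have hU : U.card ≤ k * K := by
    simpa using Finset.card_biUnion_le_card_mul Finset.univ f K fun i _ => hf i
  have h_choose : n.choose K ≤ 2 ^ K * (n - U.card).choose K := by
    refine choose_le_pow_mul_choose ?_
    have : 2 * K * (k + 1) = 2 * (k * K) + 2 * K := by ring
    omega
  have h_pos : 0 < n.choose K := Nat.choose_pos (by nlinarith)
  have h_subset : (Finset.powersetCard K Uᶜ : Set (Finset α)) ⊆ {A | ∀ i, Disjoint A (f i)} := by
    intro A hA i
    have hAU : A ⊆ Uᶜ := (Finset.mem_powersetCard.1 hA).1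
    exact (Finset.subset_compl_iff_disjoint_right.1 hAU).mono_right
      (Finset.subset_biUnion_of_mem f (Finset.mem_univ i))
  calc ((2 : ℝ) ^ K)⁻¹ ≤ (n - U.card).choose K / n.choose K := by
        rw [inv_le_iff_one_le_mul₀' (by positivity), ← mul_div_assoc, one_le_div (mod_cast h_pos)]
        exact_mod_cast h_choose
    _ = (uniformPowersetCard α K).real (Finset.powersetCard K Uᶜ) := by
        rw [measureReal_def, uniformOn_apply_finset,
          Finset.inter_eq_right.2 (Finset.powersetCard_mono (Finset.subset_univ _))]
        simp [n, Finset.card_compl]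
    _ ≤ _ := measureReal_mono h_subset

lemma ae_pi_inv_two_pow_le_uniformPowersetCard_disjoint {K k : ℕ}
    (h : 2 * K * (k + 1) ≤ Fintype.card α) :
    ∀ᵐ f ∂(Measure.pi fun _ : Fin k => uniformPowersetCard α K),
      ((2 : ℝ) ^ K)⁻¹ ≤ (uniformPowersetCard α K).real {A | ∀ i, Disjoint A (f i)} := by
  set ν := uniformPowersetCard α K
  have h_card : ∀ᵐ A ∂ν, A.card ≤ K :=
    (ae_cond_mem (Finset.measurableSet _)).mono fun A hA => (Finset.mem_powersetCard.1 hA).2.le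
  have h_pi : ∀ᵐ f ∂(Measure.pi fun _ : Fin k => ν), ∀ i, (f i).card ≤ K :=
    Filter.eventually_all.2 fun i =>
      (Measure.tendsto_eval_ae_ae (μ := fun _ => ν) (i := i)).eventually h_card
  exact h_pi.mono fun f hf => inv_two_pow_le_uniformPowersetCard_disjoint h hf

end UniformSubsets

theorem greedy_disjoint_concentration_general {Ω α : Type*} [MeasurableSpace Ω] {P : Measure Ω}
    [Fintype α] [MeasurableSpace (Finset α)] [MeasurableSingletonClass (Finset α)] {K m : ℕ}
    (h : 2 * K * m ≤ Fintype.card α) {X : Fin m → Ω → Finset α}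
    (hX : ∀ r, HasLaw (X r) (uniformPowersetCard α K) P)
    (h_indep : iIndepFun X P) :
    1 - ENNReal.ofReal (Real.exp (-((2 : ℝ) ^ (-((K : ℝ) + 2)) * m))) ≤
      P {ω | (2 : ℝ) ^ (-((K : ℝ) + 2)) * m ≤ greedyCount Disjoint (X · ω)} := by
  have := h_indep.isProbabilityMeasure
  rcases m.eq_zero_or_pos with rfl | hm
  · simp
  have : IsProbabilityMeasure (uniformPowersetCard α K) :=
    (hX ⟨0, hm⟩).isProbabilityMeasure_iff.1 this
  have h_two : ((2 : ℝ) ^ K)⁻¹ / 4 = (2 : ℝ) ^ (-((K : ℝ) + 2)) := by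
    rw [neg_add, Real.rpow_add two_pos, Real.rpow_neg two_pos.le, Real.rpow_natCast]
    norm_num [Real.rpow_neg]
    ring
  rw [← h_two]
  exact one_sub_ofReal_le_measure_ge <|
    measureReal_greedyCount_le_le_exp hX h_indep .of_discrete (by positivity) fun k hk =>
      ae_pi_inv_two_pow_le_uniformPowersetCard_disjoint ((Nat.mul_le_mul_left _ hk).trans h)

/-- Concentration claim from the proof of Lemma 3.1: let `K ≥ 1`, `n ≥ 4K²`,
`n' = ⌊n/(2K)⌋`, and let `x_1,…,x_{n'}` be independent uniformly random
`K`-element subsets of `[n]`.  Then with probability at least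
`1 − exp(−2^{−(2K+3)}·n')`, the number of indices `r` such that `x_r` is disjoint
from `x_s` for every `s < r` is at least `2^{−(K+2)}·n'`. -/
theorem greedy_disjoint_concentration {Ω : Type*} [MeasureSpace Ω]
    [IsProbabilityMeasure (ℙ : Measure Ω)]
    (K n : ℕ) (hK : 1 ≤ K) (hn : 4 * K ^ 2 ≤ n)
    (n' : ℕ) (hn' : n' = n / (2 * K))
    [MeasurableSpace (Finset (Fin n))] [MeasurableSingletonClass (Finset (Fin n))]
    (X : Fin n' → Ω → Finset (Fin n))
    (hmeas : ∀ r, Measurable (X r))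
    (hcard : ∀ r ω, (X r ω).card = K)
    (hunif : ∀ (r : Fin n') (A : Finset (Fin n)), A.card = K →
      ℙ {ω | X r ω = A} = ((n.choose K : ENNReal))⁻¹)
    (hindep : iIndepFun X ℙ) :
    1 - ENNReal.ofReal (Real.exp (-(2 : ℝ) ^ (-(2 * (K : ℝ) + 3)) * (n' : ℝ))) ≤
      ℙ {ω | (2 : ℝ) ^ (-((K : ℝ) + 2)) * (n' : ℝ) ≤
        (Nat.card {r : Fin n' // ∀ s : Fin n', s < r → Disjoint (X r ω) (X s ω)} : ℝ)} := by
  have h_size : 2 * K * n' ≤ Fintype.card (Fin n) := by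
    simpa [hn'] using Nat.mul_div_le n (2 * K)
  have h_law (r : Fin n') : HasLaw (X r) (uniformPowersetCard (Fin n) K) ℙ :=
    hasLaw_uniformOn_of_measure_eq (hmeas r).aemeasurable (.of_forall fun ω => by simp [hcard])
      fun A hA => by simpa using hunif r A (Finset.mem_powersetCard.1 hA).2
  have h_rate : (2 : ℝ) ^ (-(2 * (K : ℝ) + 3)) ≤ (2 : ℝ) ^ (-((K : ℝ) + 2)) :=
    Real.rpow_le_rpow_of_exponent_le one_le_two (by linarith [Nat.cast_nonneg (α := ℝ) K])
  refine le_trans ?_ (greedy_disjoint_concentration_general h_size h_law hindep)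
  rw [neg_mul]
  gcongr
end

section
/- Let K ≥ 1, m ≥ 1 and let M be an integer with M ≥ 2^{K+2}·log₂(m), and let n ≥ KM. Fix an assignment ψ ∈ {±1}^n and let x_1, …, x_m be independent uniformly random elements of X_{n,KM}. Then the probability that ψ satisfies all m random ¬T_{K,M}-constraints, i.e., that T_{K,M}(U_{x_i}(ψ)) = 0 for every i ∈ [m], is at least 1 − 1/m. -/
open MeasureTheory ProbabilityTheory

/-- A signed `J`-tuple over `[n]`: a vector of signs `α ∈ {±1}^J` (`true` encodes
`+1`) together with `J` distinct indices in `[n]`. -/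
def SignedTuple (n J : ℕ) : Type := (Fin J → Bool) × (Fin J ↪ Fin n)

/-- `U_x(ψ) = (α_1·ψ_{i_1}, …, α_J·ψ_{i_J})`, where `true` encodes `+1`. -/
def Ux {n J : ℕ} (x : SignedTuple n J) (ψ : Fin n → Bool) : Fin J → Bool :=
  fun j => x.1 j == ψ (x.2 j)

/-- The predicate `T_{K,M} : {±1}^{KM} → {0,1}`: `T_{K,M}(z) = 1` iff each of the
`M` consecutive blocks of `K` coordinates of `z` contains at least one `+1`. -/
def TKM (K M : ℕ) (z : Fin (K * M) → Bool) : Prop :=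
  ∀ j : Fin M, ∃ i : Fin K,
    z ⟨(j : ℕ) * K + (i : ℕ), by
      calc (j : ℕ) * K + (i : ℕ) < (j : ℕ) * K + K := Nat.add_lt_add_left i.isLt _
        _ = ((j : ℕ) + 1) * K := by ring
        _ ≤ M * K := Nat.mul_le_mul_right K j.isLt
        _ = K * M := Nat.mul_comm M K⟩ = true

/-!
For a fixed `ψ`, re-signing by `ψ` is a bijection, so `U_x(ψ)` is uniform on the cube when `x` is
uniform. The `M` blocks of a uniform point of the cube are independent and each contains a `+1`
with probability `1 - 2⁻ᴷ`, so a single constraint fails with probability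
`(1 - 2⁻ᴷ)^M ≤ exp (-M / 2ᴷ) ≤ m⁻²`. A union bound over the `m` constraints finishes the proof.
-/

section UnionBound

variable {Ω : Type*} [MeasurableSpace Ω] (μ : Measure Ω)

lemma measure_univ_sub_tsum_le_measure_forall_not {ι : Type*} [Countable ι] (p : ι → Ω → Prop) :
    μ Set.univ - ∑' i, μ {ω | p i ω} ≤ μ {ω | ∀ i, ¬ p i ω} := by
  have hcompl : {ω | ∀ i, ¬ p i ω} = Set.univ \ ⋃ i, {ω | p i ω} := by
    ext ω
    simp
  calc μ Set.univ - ∑' i, μ {ω | p i ω} ≤ μ Set.univ - μ (⋃ i, {ω | p i ω}) :=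
        tsub_le_tsub_left (measure_iUnion_le _) _
    _ ≤ μ {ω | ∀ i, ¬ p i ω} := hcompl ▸ le_measure_sdiff

lemma measure_comp_le_card_mul {α : Type*} (p : α → Prop) [Finite {a // p a}] {X : Ω → α}
    {c : ENNReal} (hX : ∀ a, p a → μ {ω | X ω = a} ≤ c) :
    μ {ω | p (X ω)} ≤ Nat.card {a // p a} * c := by
  have := Fintype.ofFinite {a // p a}
  have hfibers : {ω | p (X ω)} = ⋃ a : {a // p a}, {ω | X ω = a} := by
    ext ω
    simp
  calc μ {ω | p (X ω)} ≤ ∑ a : {a // p a}, μ {ω | X ω = a} :=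
        hfibers ▸ measure_iUnion_fintype_le μ _
    _ ≤ ∑ _a : {a // p a}, c := Finset.sum_le_sum fun a _ => hX a a.2
    _ = Nat.card {a // p a} * c := by simp

end UnionBound

section Resigning

variable {n J : ℕ}

/-- For fixed `ψ`, the bijection sending a signed tuple `x` to `U_x(ψ)` together with the indices
of `x`; the signs of `x` are recovered by multiplying by `ψ` once more. -/
def signedTupleEquiv (ψ : Fin n → Bool) :
    SignedTuple n J ≃ (Fin J → Bool) × (Fin J ↪ Fin n) where
  toFun x := (Ux x ψ, x.2)
  invFun y := (Ux y ψ, y.2)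
  left_inv x := Prod.ext (funext fun j => by simp [Ux]) rfl
  right_inv y := Prod.ext (funext fun j => by simp [Ux]) rfl

instance : Finite (SignedTuple n J) :=
  inferInstanceAs (Finite ((Fin J → Bool) × (Fin J ↪ Fin n)))

lemma card_signedTuple : Nat.card (SignedTuple n J) = 2 ^ J * Nat.card (Fin J ↪ Fin n) := by
  simp [SignedTuple]

lemma card_subtype_Ux (ψ : Fin n → Bool) (p : (Fin J → Bool) → Prop) :
    Nat.card {x : SignedTuple n J // p (Ux x ψ)} =
      Nat.card {z // p z} * Nat.card (Fin J ↪ Fin n) := by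
  have e : {x : SignedTuple n J // p (Ux x ψ)} ≃ {z // p z} × (Fin J ↪ Fin n) :=
    ((signedTupleEquiv ψ).subtypeEquiv fun _ => Iff.rfl).trans
      (Equiv.prodSubtypeFstEquivSubtypeProd (p := p))
  rw [Nat.card_congr e, Nat.card_prod]

lemma measure_Ux_le {Ω : Type*} [MeasurableSpace Ω] (μ : Measure Ω) {X : Ω → SignedTuple n J}
    (hX : ∀ a, μ {ω | X ω = a} ≤ (Nat.card (SignedTuple n J) : ENNReal)⁻¹)
    (ψ : Fin n → Bool) (p : (Fin J → Bool) → Prop) :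
    μ {ω | p (Ux (X ω) ψ)} ≤ Nat.card {z // p z} / 2 ^ J := by
  set E : ENNReal := (Nat.card (Fin J ↪ Fin n) : ENNReal)
  calc μ {ω | p (Ux (X ω) ψ)}
      ≤ Nat.card {x : SignedTuple n J // p (Ux x ψ)} *
          (Nat.card (SignedTuple n J) : ENNReal)⁻¹ :=
        measure_comp_le_card_mul μ (fun x => p (Ux x ψ)) fun a _ => hX a
    _ = Nat.card {z // p z} / 2 ^ J * (E / E) := by
        rw [card_subtype_Ux, card_signedTuple]
        push_cast
        rw [ENNReal.mul_inv (by simp) (by simp)]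
        simp only [div_eq_mul_inv, E]
        ring
    _ ≤ Nat.card {z // p z} / 2 ^ J := mul_le_of_le_one_right' ENNReal.div_self_le_one

end Resigning

section Blocks

variable (K M : ℕ)

/-- The indexing of `KM` coordinates by `M` consecutive blocks of length `K`: the pair `(j, i)`
stands for coordinate `i` of block `j`. -/
def blockIndexEquiv : Fin M × Fin K ≃ Fin (K * M) :=
  finProdFinEquiv.trans (finCongr (Nat.mul_comm M K))

variable {K M} in
lemma TKM_iff_forall_block {z : Fin (K * M) → Bool} :
    TKM K M z ↔ ∀ j, ∃ i, z (blockIndexEquiv K M (j, i)) = true := by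
  refine forall_congr' fun j => exists_congr fun i => ?_
  have hindex : blockIndexEquiv K M (j, i) = (j * K + i : ℕ) := by
    simp [blockIndexEquiv, add_comm, mul_comm]
  simp only [← hindex, Fin.eta]

lemma card_exists_eq_true (ι : Type*) [Finite ι] :
    Nat.card {w : ι → Bool // ∃ i, w i = true} = 2 ^ Nat.card ι - 1 := by
  classical
  have := Fintype.ofFinite ι
  have hne (w : ι → Bool) : (∃ i, w i = true) ↔ ¬ w = fun _ => false := by
    simp [funext_iff]
  simp [hne, Fintype.card_subtype_compl]

lemma card_TKM : Nat.card {z // TKM K M z} = (2 ^ K - 1) ^ M := by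
  have e : {z // TKM K M z} ≃ (Fin M → {w : Fin K → Bool // ∃ i, w i = true}) :=
    ((((blockIndexEquiv K M).arrowCongr (Equiv.refl Bool)).symm.trans
      (Equiv.curry (Fin M) (Fin K) Bool)).subtypeEquiv fun _ => TKM_iff_forall_block).trans
      (Equiv.subtypePiEquivPi (p := fun _ (w : Fin K → Bool) => ∃ i, w i = true))
  rw [Nat.card_congr e, Nat.card_fun, card_exists_eq_true, Nat.card_fin, Nat.card_fin]

lemma card_TKM_div_two_pow :
    (Nat.card {z // TKM K M z} / 2 ^ (K * M) : ENNReal) =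
      ENNReal.ofReal ((1 - (2 ^ K)⁻¹) ^ M) := by
  have hreal : (Nat.card {z // TKM K M z} / 2 ^ (K * M) : ℝ) = (1 - (2 ^ K)⁻¹) ^ M := by
    rw [card_TKM, pow_mul, Nat.cast_pow, Nat.cast_sub Nat.one_le_two_pow, ← div_pow]
    push_cast
    rw [sub_div, div_self (by positivity), one_div]
  rw [← hreal, ENNReal.ofReal_div_of_pos (by positivity), ENNReal.ofReal_natCast,
    ENNReal.ofReal_pow (by norm_num), ENNReal.ofReal_ofNat]

end Blocks

lemma one_sub_pow_le_inv_of_log_le {q c : ℝ} {M : ℕ} (hq : q ≤ 1) (hc : 0 < c)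
    (h : Real.log c ≤ M * q) : (1 - q) ^ M ≤ c⁻¹ :=
  calc (1 - q) ^ M ≤ Real.exp (-q) ^ M :=
        pow_le_pow_left₀ (sub_nonneg.2 hq) (Real.one_sub_le_exp_neg q) M
    _ = Real.exp (-(M * q)) := by rw [← Real.exp_nat_mul, mul_neg]
    _ ≤ Real.exp (-Real.log c) := Real.exp_le_exp.2 (neg_le_neg h)
    _ = c⁻¹ := by rw [Real.exp_neg, Real.exp_log hc]

lemma log_le_logb {b x : ℝ} (hb : 1 < b) (hlogb : Real.log b ≤ 1) (hx : 1 ≤ x) :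
    Real.log x ≤ Real.logb b x :=
  le_div_self (Real.log_nonneg hx) (Real.log_pos hb) hlogb

lemma two_pow_succ_mul_log_le (K : ℕ) {x : ℝ} (hx : 1 ≤ x) :
    2 ^ (K + 1) * Real.log x ≤ 2 ^ (K + 2) * Real.logb 2 x := by
  have hlog : Real.log x ≤ Real.logb 2 x :=
    log_le_logb one_lt_two (by linarith [Real.log_two_lt_d9]) hx
  have hpow : (2 : ℝ) ^ (K + 1) ≤ 2 ^ (K + 2) := pow_le_pow_right₀ one_le_two (by lia)
  exact mul_le_mul hpow hlog (Real.log_nonneg hx) (by positivity)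

lemma measure_TKM_Ux_le {K m M n : ℕ} (hm : 1 ≤ m) (hM : 2 ^ (K + 1) * Real.log m ≤ M)
    {Ω : Type*} [MeasurableSpace Ω] (μ : Measure Ω) {X : Ω → SignedTuple n (K * M)}
    (hX : ∀ a, μ {ω | X ω = a} ≤ (Nat.card (SignedTuple n (K * M)) : ENNReal)⁻¹)
    (ψ : Fin n → Bool) :
    μ {ω | TKM K M (Ux (X ω) ψ)} ≤ ((m : ENNReal) ^ 2)⁻¹ := by
  have hm0 : (0 : ℝ) < m := Nat.cast_pos.2 hm
  have hlog : Real.log ((m : ℝ) ^ 2) ≤ M * (2 ^ K)⁻¹ := by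
    rwa [Real.log_pow, Nat.cast_ofNat, ← div_eq_mul_inv, le_div_iff₀ (by positivity),
      mul_right_comm, ← pow_succ']
  calc μ {ω | TKM K M (Ux (X ω) ψ)} ≤ Nat.card {z // TKM K M z} / 2 ^ (K * M) :=
        measure_Ux_le μ hX ψ (TKM K M)
    _ = ENNReal.ofReal ((1 - (2 ^ K)⁻¹) ^ M) := card_TKM_div_two_pow K M
    _ ≤ ENNReal.ofReal (((m : ℝ) ^ 2)⁻¹) := ENNReal.ofReal_le_ofReal <|
        one_sub_pow_le_inv_of_log_le (inv_le_one_of_one_le₀ (one_le_pow₀ one_le_two))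
          (by positivity) hlog
    _ = ((m : ENNReal) ^ 2)⁻¹ := by
        rw [ENNReal.ofReal_inv_of_pos (by positivity), ENNReal.ofReal_pow hm0.le,
          ENNReal.ofReal_natCast]

theorem random_negTKM_satisfied_general {K m M n : ℕ} (hm : 1 ≤ m)
    (hM : 2 ^ (K + 1) * Real.log m ≤ M) (ψ : Fin n → Bool)
    {Ω : Type*} [MeasurableSpace Ω] (μ : Measure Ω) [IsProbabilityMeasure μ]
    (X : Fin m → Ω → SignedTuple n (K * M))
    (hunif : ∀ i a, μ {ω | X i ω = a} = (Nat.card (SignedTuple n (K * M)) : ENNReal)⁻¹) :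
    1 - (m : ENNReal)⁻¹ ≤ μ {ω | ∀ i, ¬ TKM K M (Ux (X i ω) ψ)} := by
  have hm0 : (m : ENNReal) ≠ 0 := Nat.cast_ne_zero.2 (Nat.one_le_iff_ne_zero.1 hm)
  have hsum : ∑' i, μ {ω | TKM K M (Ux (X i ω) ψ)} ≤ (m : ENNReal)⁻¹ :=
    calc ∑' i, μ {ω | TKM K M (Ux (X i ω) ψ)} ≤ ∑' _i : Fin m, ((m : ENNReal) ^ 2)⁻¹ :=
          ENNReal.tsum_le_tsum fun i => measure_TKM_Ux_le hm hM μ (fun a => (hunif i a).le) ψ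
      _ = m * ((m : ENNReal)⁻¹ * (m : ENNReal)⁻¹) := by
          rw [tsum_fintype, Finset.sum_const, Finset.card_fin, nsmul_eq_mul, ENNReal.inv_pow, sq]
      _ = (m : ENNReal)⁻¹ := ENNReal.mul_inv_cancel_left hm0 (ENNReal.natCast_ne_top m)
  calc 1 - (m : ENNReal)⁻¹ ≤ μ Set.univ - ∑' i, μ {ω | TKM K M (Ux (X i ω) ψ)} := by
        rw [measure_univ]
        exact tsub_le_tsub_left hsum 1
    _ ≤ μ {ω | ∀ i, ¬ TKM K M (Ux (X i ω) ψ)} :=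
        measure_univ_sub_tsum_le_measure_forall_not μ _

/-- Satisfiability-preservation claim in the proof of Lemma 3.3: if
`M ≥ 2^{K+2}·log₂ m` and `x_1,…,x_m` are independent uniformly random elements of
`X_{n,KM}`, then a fixed assignment `ψ` satisfies all `m` random
`¬T_{K,M}`-constraints (i.e. `T_{K,M}(U_{x_i}(ψ)) = 0` for all `i`) with
probability at least `1 − 1/m`. -/
theorem random_negTKM_satisfied (K m M n : ℕ) (hK : 1 ≤ K) (hm : 1 ≤ m)
    (hM : (2 : ℝ) ^ (K + 2) * Real.logb 2 (m : ℝ) ≤ (M : ℝ)) (hn : K * M ≤ n)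
    (ψ : Fin n → Bool)
    {Ω : Type*} [MeasureSpace Ω] [IsProbabilityMeasure (ℙ : Measure Ω)]
    [MeasurableSpace (SignedTuple n (K * M))]
    (X : Fin m → Ω → SignedTuple n (K * M))
    (hunif : ∀ (i : Fin m) (a : SignedTuple n (K * M)),
      ℙ {ω | X i ω = a} = (Nat.card (SignedTuple n (K * M)) : ENNReal)⁻¹)
    (hindep : iIndepFun X ℙ) :
    1 - (m : ENNReal)⁻¹ ≤ ℙ {ω | ∀ i : Fin m, ¬ TKM K M (Ux (X i ω) ψ)} :=
  random_negTKM_satisfied_general hm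
    ((two_pow_succ_mul_log_le K (Nat.one_le_cast.2 hm)).trans hM) ψ ℙ X hunif
end

section
/- Let n ≥ 1 and let F : (Fin n → Bool) → Bool be computed by a DNF formula with at most n clauses over n variables. Then there exist a finite type Q with |Q| ≤ 2n² + 1 and a deterministic finite automaton over the alphabet Bool with state type Q such that for every x : Fin n → Bool, the automaton accepts the word of length n² consisting of n consecutive copies of the string x(0)x(1)⋯x(n−1) if and only if F(x) = true. -/
/-!
On `k` copies of `x`, the automaton spends the `i`-th copy on the `i`-th clause: it remembers the
clause, the position inside the copy and one bit saying whether the clause has survived so far. A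
clause that survives a whole copy sends the automaton to an absorbing accepting state. After the
last clause it starts over with the first one, which is harmless since every copy is the same.
-/

/-- A DNF clause over `n` variables is a list of literals `[z_v = c]` (a variable
together with a required Boolean value); it evaluates to `1` on `x` iff every
listed variable has its specified value. -/
def evalClause (c : List (Fin n × Bool)) (x : Fin n → Bool) : Bool :=
  c.all fun l => x l.1 == l.2

/-- A DNF formula is a disjunction of DNF clauses. -/
def evalDNF (φ : List (List (Fin n × Bool))) (x : Fin n → Bool) : Bool :=
  φ.any fun c => evalClause c x

section RowScanner

variable {ι α : Type*} {n : ℕ}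

/-- The automaton that reads a word as consecutive rows of length `n + 1` and looks for a row all
of whose letters pass the test of that row. In the state `some (i, j, s)` the next letter is in
column `j` of a row tested against `ok i`, and `s` records whether the earlier letters of that row
passed; the next row is tested against `ok (next i)`. The state `none` is the accepting one. -/
def rowScanner (next : ι → ι) (ok : ι → Fin (n + 1) → α → Bool) (i₀ : ι) :
    DFA α (Option (ι × Fin (n + 1) × Bool)) where
  step
    | none, _ => none
    | some (i, j, s), a =>
      Fin.lastCases (motive := fun _ => Option (ι × Fin (n + 1) × Bool))
        (if s && ok i (Fin.last n) a then none else some (next i, 0, true))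
        (fun j => some (i, j.succ, s && ok i j.castSucc a)) j
  start := some (i₀, 0, true)
  accept := {none}

namespace rowScanner

variable (next : ι → ι) (ok : ι → Fin (n + 1) → α → Bool) (i₀ : ι)

theorem step_castSucc (i : ι) (j : Fin n) (s : Bool) (a : α) :
    (rowScanner next ok i₀).step (some (i, j.castSucc, s)) a =
      some (i, j.succ, s && ok i j.castSucc a) :=
  Fin.lastCases_castSucc (motive := fun _ => Option (ι × Fin (n + 1) × Bool)) j

theorem step_last (i : ι) (s : Bool) (a : α) :
    (rowScanner next ok i₀).step (some (i, Fin.last n, s)) a =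
      if s && ok i (Fin.last n) a then none else some (next i, 0, true) :=
  Fin.lastCases_last (motive := fun _ => Option (ι × Fin (n + 1) × Bool))

theorem evalFrom_none (w : List α) : (rowScanner next ok i₀).evalFrom none w = none := by
  induction w with
  | nil => rfl
  | cons _ _ ih => exact ih

theorem evalFrom_take_ofFn (i : ι) (x : Fin (n + 1) → α) (j : Fin (n + 1)) :
    (rowScanner next ok i₀).evalFrom (some (i, 0, true)) ((List.ofFn x).take j) =
      some (i, j, decide (∀ l < j, ok i l (x l))) := by
  induction j using Fin.induction with
  | zero => simp
  | succ j ih =>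
    have take_succ : (List.ofFn x).take j.succ =
        (List.ofFn x).take j.castSucc ++ [x j.castSucc] := by
      rw [Fin.val_succ, List.take_succ_eq_append_getElem (by simp), List.getElem_ofFn]
      rfl
    rw [take_succ, DFA.evalFrom_append_singleton, ih, step_castSucc]
    simp [← Fin.le_castSucc_iff, le_iff_lt_or_eq, or_imp, forall_and, Bool.decide_and]

theorem evalFrom_ofFn (i : ι) (x : Fin (n + 1) → α) :
    (rowScanner next ok i₀).evalFrom (some (i, 0, true)) (List.ofFn x) =
      if ∀ j, ok i j (x j) then none else some (next i, 0, true) := by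
  have split_last : List.ofFn x = (List.ofFn x).take (Fin.last n) ++ [x (Fin.last n)] := by
    simp [List.ofFn_succ_last, -List.ofFn_succ]
  rw [split_last, DFA.evalFrom_append_singleton, evalFrom_take_ofFn, step_last]
  simp [Fin.forall_fin_succ']

theorem evalFrom_flatten_ofFn_eq_none_iff (rows : List (Fin (n + 1) → α)) (i : ι) :
    (rowScanner next ok i₀).evalFrom (some (i, 0, true)) (rows.map List.ofFn).flatten = none ↔
      ∃ t, ∃ ht : t < rows.length, ∀ j, ok (next^[t] i) j (rows[t] j) := by
  induction rows generalizing i with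
  | nil => simp
  | cons x rows ih =>
    rw [List.map_cons, List.flatten_cons, DFA.evalFrom_of_append, evalFrom_ofFn,
      ← Nat.or_exists_add_one]
    split_ifs with hx
    · simp [evalFrom_none, hx]
    · simp [ih, hx]

theorem flatten_replicate_ofFn_mem_accepts_iff {k : ℕ} (hk : ∀ i, ∃ t < k, next^[t] i₀ = i)
    (x : Fin (n + 1) → α) :
    (List.replicate k (List.ofFn x)).flatten ∈ (rowScanner next ok i₀).accepts ↔
      ∃ i, ∀ j, ok i j (x j) := by
  rw [← List.map_replicate, DFA.mem_accepts]
  refine (evalFrom_flatten_ofFn_eq_none_iff next ok i₀ _ i₀).trans ⟨?_, ?_⟩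
  · rintro ⟨t, ht, hrow⟩
    exact ⟨next^[t] i₀, by simpa using hrow⟩
  · rintro ⟨i, hrow⟩
    obtain ⟨t, ht, rfl⟩ := hk i
    exact ⟨t, by simpa using ht, by simpa using hrow⟩

end rowScanner

end RowScanner

section DNF

variable {n : ℕ}

/-- Whether the clause `c` tolerates the value `b` for the variable `j`, that is, whether no literal
of `c` is violated by `b` at `j`. This is the test a clause performs on a single letter. -/
def clauseAllows (c : List (Fin n × Bool)) (j : Fin n) (b : Bool) : Bool :=
  c.all fun l => decide (l.1 = j → b = l.2)

theorem evalClause_eq_true_iff (c : List (Fin n × Bool)) (x : Fin n → Bool) :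
    evalClause c x = true ↔ ∀ j, clauseAllows c j (x j) = true := by
  simp only [evalClause, clauseAllows, List.all_eq_true, beq_iff_eq, decide_eq_true_eq]
  exact ⟨fun h j l hl hj => hj ▸ h l hl, fun h l hl => h l.1 l hl rfl⟩

theorem evalDNF_eq_true_iff (φ : List (List (Fin n × Bool))) (x : Fin n → Bool) :
    evalDNF φ x = true ↔ ∃ i : Fin φ.length, ∀ j, clauseAllows φ[i] j (x j) = true := by
  simp only [evalDNF, List.any_eq_true, ← evalClause_eq_true_iff, List.mem_iff_get]
  simp

end DNF

theorem iterate_add_one_fin_zero {m : ℕ} (i : Fin (m + 1)) :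
    (· + 1)^[(i : ℕ)] (0 : Fin (m + 1)) = i := by
  induction i using Fin.induction with
  | zero => rfl
  | succ j ih =>
    rw [Fin.val_castSucc] at ih
    rw [Fin.val_succ, Function.iterate_succ_apply', ih, Fin.coeSucc_eq_succ]

theorem exists_dfa_unit_mem_accepts_iff {α : Type*} (p : Prop) :
    ∃ M : DFA α Unit, ∀ w, w ∈ M.accepts ↔ p :=
  ⟨⟨fun _ _ => (), (), {_q | p}⟩, fun _ => Iff.rfl⟩

theorem dnf_to_automaton_general (n : ℕ) (φ : List (List (Fin n × Bool))) :
    ∃ (Q : Type) (inst : Fintype Q) (M : DFA Bool Q),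
      @Fintype.card Q inst ≤ 2 * φ.length * n + 1 ∧
      ∀ k ≥ φ.length, ∀ x : Fin n → Bool,
        ((List.replicate k ((List.finRange n).map x)).flatten ∈ M.accepts ↔
          evalDNF φ x = true) := by
  -- Without clauses or without variables `evalDNF φ` is constant, and there is no initial pair
  -- (clause, position) for `rowScanner` to start from.
  match n, φ with
  | _, [] =>
    obtain ⟨M, hM⟩ := exists_dfa_unit_mem_accepts_iff False
    exact ⟨Unit, inferInstance, M, by simp, by simp [hM, evalDNF]⟩
  | 0, φ =>
    obtain ⟨M, hM⟩ := exists_dfa_unit_mem_accepts_iff (evalDNF φ Fin.elim0 = true)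
    exact ⟨Unit, inferInstance, M, by simp,
      fun _ _ x => Subsingleton.elim Fin.elim0 x ▸ hM _⟩
  | n + 1, c :: cs =>
    let φ := c :: cs
    have reaches (k : ℕ) (hk : k ≥ φ.length) (i : Fin φ.length) :
        ∃ t < k, (· + 1)^[t] (0 : Fin (cs.length + 1)) = i :=
      ⟨i, i.isLt.trans_le hk, iterate_add_one_fin_zero i⟩
    refine ⟨Option (Fin φ.length × Fin (n + 1) × Bool), inferInstance,
      rowScanner (· + 1) (fun i => clauseAllows φ[i]) (0 : Fin (cs.length + 1)), ?_,
      fun k hk x => ?_⟩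
    · simp only [Fintype.card_option, Fintype.card_prod, Fintype.card_fin, Fintype.card_bool]
      exact le_of_eq (by ring)
    · rw [← List.ofFn_eq_map, evalDNF_eq_true_iff]
      exact rowScanner.flatten_replicate_ofFn_mem_accepts_iff _ _ _ (reaches k hk) x

/-- Section 4 of the paper: if `F : {0,1}^n → {0,1}` is computed by a DNF formula
with at most `n` clauses over `n` variables, then there is a deterministic finite
automaton over the alphabet `Bool`, with at most `2n² + 1` states, accepting the
word consisting of `n` consecutive copies of `x(0)⋯x(n−1)` iff `F(x) = 1`. -/
theorem dnf_to_automaton (n : ℕ) (hn : 1 ≤ n) (F : (Fin n → Bool) → Bool)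
    (φ : List (List (Fin n × Bool))) (hφ : φ.length ≤ n)
    (hF : ∀ x, F x = evalDNF φ x) :
    ∃ (Q : Type) (inst : Fintype Q) (M : DFA Bool Q),
      @Fintype.card Q inst ≤ 2 * n ^ 2 + 1 ∧
      ∀ x : Fin n → Bool,
        ((List.replicate n ((List.finRange n).map x)).flatten ∈ M.accepts ↔
          F x = true) := by
  obtain ⟨Q, inst, M, hcard, hM⟩ := dnf_to_automaton_general n φ
  exact ⟨Q, inst, M, hcard.trans (by nlinarith), fun x => hF x ▸ hM n hφ x⟩
end
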